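/- For every fixed ε ∈ (0,1), the minimax MSE of block soft thresholding converges as the block size B → ∞: lim_{B→∞} M_B(ε|BlockSoft) = 2ε − ε². Moreover, if for each B the minimax threshold τ*(ε|B) is a minimizer over τ ≥ 0 of sup_{ν∈F_{ε,B}} (1/B) E ‖X − η^soft(X+Z;τ)‖₂², then lim_{B→∞} τ*(ε|B)/√B = 1 − ε. -/

import Mathlib

open MeasureTheory ProbabilityTheory ENNReal Filter

noncomputable section

/-- The standard Gaussian measure `N(0, I_B)` on `ℝ^B`. -/
def stdGaussian (B : ℕ) : Measure (Fin B → ℝ) :=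
  Measure.pi fun _ => gaussianReal 0 1

/-- Block soft thresholding `η^soft(y;τ) = (1 - τ/‖y‖₂)₊ · y` on `ℝ^B`
(with `η^soft(0;τ) = 0`). -/
def blockSoft (B : ℕ) (τ : ℝ) (y : Fin B → ℝ) : Fin B → ℝ :=
  (max (1 - τ / Real.sqrt (∑ i, (y i) ^ 2)) 0) • y

/-- The class `F_{ε,B}` of Borel probability measures `ν` on `ℝ^B` with
`ν({0}) ≥ 1 - ε`. -/
def sparseClass (B : ℕ) (ε : ℝ) : Set (Measure (Fin B → ℝ)) :=
  {ν | IsProbabilityMeasure ν ∧ ENNReal.ofReal (1 - ε) ≤ ν {0}}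

/-- Worst-case MSE `sup_{ν ∈ F_{ε,B}} E ‖X - η^soft(X+Z;τ)‖₂²` of block soft
thresholding at threshold `τ`, with `X ∼ ν`, `Z ∼ N(0,I_B)` independent. -/
def blockSoftWorst (B : ℕ) (ε : ℝ) (τ : ℝ) : ℝ≥0∞ :=
  ⨆ ν ∈ sparseClass B ε,
    ∫⁻ p, ENNReal.ofReal (∑ i, (p.1 i - blockSoft B τ (p.1 + p.2) i) ^ 2)
      ∂(ν.prod (stdGaussian B))

/-- The minimax MSE of block soft thresholding,
`M_B(ε|BlockSoft) = (1/B) inf_{τ ≥ 0} sup_{ν ∈ F_{ε,B}} E ‖X - η^soft(X+Z;τ)‖₂²`. -/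
def MBlockSoft (B : ℕ) (ε : ℝ) : ℝ≥0∞ :=
  (B : ℝ≥0∞)⁻¹ * ⨅ (τ : ℝ) (_ : 0 ≤ τ), blockSoftWorst B ε τ

/-!
Soft thresholding subtracts from `y` its metric projection onto the ball of radius `τ`. Since the
projection is monotone and the noise `Z` is centred, the risk at any signal is at most
`τ² + E ‖Z‖²`, and this value is approached as the signal goes to infinity along a ray. Hence the
worst sparse priors put mass `1 - ε` at `0` and `ε` far away, and the worst-case risk is exactly
`(1 - ε) E (‖Z‖ - τ)₊² + ε (τ² + E ‖Z‖²)`.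

Put `s = τ / √B` and `R = ‖Z‖ / √B`. Because `E R² = 1` and `R` concentrates at `1`, the worst-case
risk per coordinate tends to `(1 - ε) (1 - s)₊² + ε (1 + s²)`, whose minimum `2ε - ε²` is attained
at `s = 1 - ε`. At finite `B` the risk is bounded in terms of `s` and the mean `r = E R` alone, and
the lower bound grows quadratically in `s - (1 - ε) r`, so minimizers are forced to converge too.
-/

section NormClipping

variable {E : Type*} [NormedAddCommGroup E] [NormedSpace ℝ E] {τ : ℝ}

/-- Soft thresholding of the norm of a vector: the coordinate-free form of
`blockSoft`. At `y = 0` the junk value `τ / 0 = 0` is harmless. -/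
def softThreshold (τ : ℝ) (y : E) : E := max (1 - τ / ‖y‖) 0 • y

/-- Norm clipping, the part of `y` that soft thresholding removes. For `0 ≤ τ` in an inner product
space it is the metric projection onto the closed ball of radius `τ`. -/
def clipNorm (τ : ℝ) (y : E) : E := min (τ / ‖y‖) 1 • y

lemma softThreshold_eq_sub_clipNorm (τ : ℝ) (y : E) :
    softThreshold τ y = y - clipNorm τ y := by
  rw [softThreshold, clipNorm, ← sub_self (1 : ℝ), max_sub_sub_left, sub_smul, one_smul]

lemma sub_softThreshold_add (τ : ℝ) (x z : E) :
    x - softThreshold τ (x + z) = clipNorm τ (x + z) - z := by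
  rw [softThreshold_eq_sub_clipNorm]; abel

lemma norm_clipNorm (hτ : 0 ≤ τ) (y : E) : ‖clipNorm τ y‖ = min τ ‖y‖ := by
  rcases eq_or_ne y 0 with rfl | hy
  · simp [clipNorm, hτ]
  · rw [clipNorm, norm_smul, Real.norm_of_nonneg (by positivity),
      min_mul_of_nonneg _ _ (norm_nonneg y), div_mul_cancel₀ _ (norm_ne_zero_iff.2 hy), one_mul]

lemma norm_softThreshold (hτ : 0 ≤ τ) (y : E) : ‖softThreshold τ y‖ = max (‖y‖ - τ) 0 := by
  rcases eq_or_ne y 0 with rfl | hy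
  · simp [softThreshold, hτ]
  · rw [softThreshold, norm_smul, Real.norm_of_nonneg (le_max_right _ _),
      max_mul_of_nonneg _ _ (norm_nonneg y), sub_mul, div_mul_cancel₀ _ (norm_ne_zero_iff.2 hy),
      one_mul, zero_mul]

lemma clipNorm_smul {t : ℝ} (ht : 0 < t) (τ : ℝ) (y : E) :
    clipNorm τ (t • y) = min (τ / ‖y‖) t • y := by
  rw [clipNorm, smul_smul, norm_smul, Real.norm_of_nonneg ht.le, min_mul_of_nonneg _ _ ht.le,
    one_mul, mul_comm t, ← div_div, div_mul_cancel₀ _ ht.ne']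

lemma tendsto_clipNorm_smul_add (τ : ℝ) {x : E} (hx : x ≠ 0) (z : E) :
    Tendsto (fun t : ℝ => clipNorm τ (t • x + z)) atTop (nhds ((τ / ‖x‖) • x)) := by
  have hdir : Tendsto (fun t : ℝ => x + t⁻¹ • z) atTop (nhds x) := by
    simpa using ((tendsto_inv_atTop_zero (𝕜 := ℝ)).smul_const z).const_add x
  have hscale : Tendsto (fun t : ℝ => τ / ‖x + t⁻¹ • z‖) atTop (nhds (τ / ‖x‖)) :=
    tendsto_const_nhds.div hdir.norm (norm_ne_zero_iff.2 hx)
  refine (hscale.smul hdir).congr' ?_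
  filter_upwards [eventually_gt_atTop 0, eventually_ge_atTop (τ / ‖x‖ + 1),
    hscale.eventually_lt_const (lt_add_one _)] with t ht hle hlt
  rw [← min_eq_left (hlt.le.trans hle), ← clipNorm_smul ht, smul_add, smul_inv_smul₀ ht.ne']

end NormClipping

section InnerProduct

variable {E : Type*} [NormedAddCommGroup E] [InnerProductSpace ℝ E] {τ : ℝ}

lemma inner_clipNorm_self (hτ : 0 ≤ τ) (y : E) : inner ℝ (clipNorm τ y) y = min τ ‖y‖ * ‖y‖ := by
  rw [← norm_clipNorm hτ, clipNorm, real_inner_smul_left, real_inner_self_eq_norm_mul_norm,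
    norm_smul, Real.norm_of_nonneg (by positivity), mul_assoc]

lemma inner_clipNorm_le (hτ : 0 ≤ τ) (x y : E) : inner ℝ (clipNorm τ x) y ≤ min τ ‖x‖ * ‖y‖ :=
  norm_clipNorm hτ x ▸ real_inner_le_norm _ _

lemma inner_clipNorm_sub_nonneg (hτ : 0 ≤ τ) (x y : E) :
    0 ≤ inner ℝ (clipNorm τ x - clipNorm τ y) (x - y) := by
  have hmono : 0 ≤ (min τ ‖x‖ - min τ ‖y‖) * (‖x‖ - ‖y‖) := by
    rcases le_total ‖x‖ ‖y‖ with h | h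
    · exact mul_nonneg_of_nonpos_of_nonpos (sub_nonpos.2 (min_le_min_left τ h)) (sub_nonpos.2 h)
    · exact mul_nonneg (sub_nonneg.2 (min_le_min_left τ h)) (sub_nonneg.2 h)
  simp only [inner_sub_left, inner_sub_right, inner_clipNorm_self hτ]
  linarith [inner_clipNorm_le hτ x y, inner_clipNorm_le hτ y x]

lemma norm_sub_softThreshold_add_sq_le (hτ : 0 ≤ τ) (x z : E) :
    ‖x - softThreshold τ (x + z)‖ ^ 2 ≤ ‖clipNorm τ x - z‖ ^ 2 + (τ ^ 2 - ‖clipNorm τ x‖ ^ 2) := by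
  have hmono : inner ℝ (clipNorm τ x) z ≤ inner ℝ (clipNorm τ (x + z)) z := by
    simpa [inner_sub_left] using inner_clipNorm_sub_nonneg hτ (x + z) x
  have hnorm : ‖clipNorm τ (x + z)‖ ^ 2 ≤ τ ^ 2 := by
    gcongr; exact (norm_clipNorm hτ _).trans_le (min_le_left _ _)
  rw [sub_softThreshold_add, norm_sub_sq_real, norm_sub_sq_real]
  linarith

end InnerProduct

section RandomNorm

variable {Ω : Type*} {mΩ : MeasurableSpace Ω} {P : Measure Ω} {R : Ω → ℝ}

lemma integrable_max_sub_zero_sq [IsFiniteMeasure P] (hR : MemLp R 2 P) (τ : ℝ) :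
    Integrable (fun ω => max (R ω - τ) 0 ^ 2) P :=
  ((hR.sub (memLp_const τ)).sup (memLp_const 0)).integrable_sq

variable [IsProbabilityMeasure P]

lemma sq_integral_le_integral_sq (hR : MemLp R 2 P) : P[R] ^ 2 ≤ ∫ ω, R ω ^ 2 ∂P := by
  have h := variance_eq_sub hR ▸ variance_nonneg R P
  simpa using h

lemma sq_max_integral_sub_zero_le (hR : MemLp R 2 P) (τ : ℝ) :
    max (P[R] - τ) 0 ^ 2 ≤ ∫ ω, max (R ω - τ) 0 ^ 2 ∂P := by
  have hL2 : MemLp (fun ω => max (R ω - τ) 0) 2 P :=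
    (hR.sub (memLp_const τ)).sup (memLp_const 0)
  have hint : Integrable R P := hR.integrable one_le_two
  have hmean : max (P[R] - τ) 0 ≤ ∫ ω, max (R ω - τ) 0 ∂P := by
    refine max_le ?_ (integral_nonneg fun ω => le_max_right _ _)
    calc P[R] - τ = ∫ ω, (R ω - τ) ∂P := by simp [integral_sub hint (integrable_const τ)]
      _ ≤ ∫ ω, max (R ω - τ) 0 ∂P :=
        integral_mono (hint.sub (integrable_const τ)) (hL2.integrable one_le_two)
          fun ω => le_max_left _ _
  exact (pow_le_pow_left₀ (le_max_right _ _) hmean 2).trans (sq_integral_le_integral_sq hL2)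

lemma integral_sub_const_sq (hR : MemLp R 2 P) (τ : ℝ) :
    ∫ ω, (R ω - τ) ^ 2 ∂P = ∫ ω, R ω ^ 2 ∂P - 2 * τ * P[R] + τ ^ 2 := by
  have hlin : Integrable (fun ω => 2 * τ * R ω) P := (hR.integrable one_le_two).const_mul _
  have hquad : Integrable (fun ω => R ω ^ 2 - 2 * τ * R ω) P := hR.integrable_sq.sub hlin
  calc ∫ ω, (R ω - τ) ^ 2 ∂P = ∫ ω, (R ω ^ 2 - 2 * τ * R ω + τ ^ 2) ∂P := by
        congr with ω; ring
    _ = _ := by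
        rw [integral_add hquad (integrable_const _),
          integral_sub hR.integrable_sq hlin, integral_const_mul]
        simp

lemma integral_max_sub_zero_sq_le (hR : MemLp R 2 P) (τ : ℝ) :
    ∫ ω, max (R ω - τ) 0 ^ 2 ∂P ≤ ∫ ω, R ω ^ 2 ∂P - 2 * τ * P[R] + τ ^ 2 := by
  rw [← integral_sub_const_sq hR]
  refine integral_mono (integrable_max_sub_zero_sq hR τ) (hR.sub (memLp_const τ)).integrable_sq
    fun ω => ?_
  rcases le_total (R ω - τ) 0 with h | h <;> simp [h, sq_nonneg]

-- `c |R - c| ≤ |R + c| |R - c| = |R² - c²|` at `c² = E R²`; then `Var R ≤ E (R - c)²`.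
lemma variance_mul_integral_sq_le (hR : MemLp (fun ω => R ω ^ 2) 2 P) (hR0 : ∀ ω, 0 ≤ R ω)
    (hRm : AEStronglyMeasurable R P) :
    Var[R; P] * (∫ ω, R ω ^ 2 ∂P) ≤ Var[fun ω => R ω ^ 2; P] := by
  set M : ℝ := ∫ ω, R ω ^ 2 ∂P
  have hM : 0 ≤ M := integral_nonneg fun ω => sq_nonneg _
  have hL2 : MemLp R 2 P := (memLp_two_iff_integrable_sq hRm).2 (hR.integrable one_le_two)
  have hpoint : ∀ ω, (R ω - √M) ^ 2 * M ≤ (R ω ^ 2 - M) ^ 2 := fun ω => by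
    nth_rw 2 3 [← Real.sq_sqrt hM]
    rw [sq_sub_sq, mul_pow, mul_comm]
    gcongr
    linarith [hR0 ω]
  have hvar : Var[R; P] ≤ ∫ ω, (R ω - √M) ^ 2 ∂P := by
    rw [← variance_sub_const hRm √M]
    exact variance_le_expectation_sq (hRm.sub aestronglyMeasurable_const)
  calc Var[R; P] * M ≤ (∫ ω, (R ω - √M) ^ 2 ∂P) * M := by gcongr
    _ = ∫ ω, (R ω - √M) ^ 2 * M ∂P := (integral_mul_const _ _).symm
    _ ≤ ∫ ω, (R ω ^ 2 - M) ^ 2 ∂P :=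
      integral_mono ((hL2.sub (memLp_const _)).integrable_sq.mul_const _)
        (hR.sub (memLp_const _)).integrable_sq hpoint
    _ = Var[fun ω => R ω ^ 2; P] := (variance_eq_integral hR.aemeasurable).symm

end RandomNorm

section SparseSup

-- The two-point measure `p δ_a + q δ_x` attains `p * r a + q * r x`.
lemma iSup_lintegral_of_le_measure_singleton {X : Type*} [MeasurableSpace X]
    [MeasurableSingletonClass X] (r : X → ℝ≥0∞) (a : X) {p q : ℝ≥0∞} (hpq : p + q = 1) :
    ⨆ ν ∈ {ν : Measure X | IsProbabilityMeasure ν ∧ p ≤ ν {a}}, ∫⁻ x, r x ∂ν =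
      p * r a + q * ⨆ x, r x := by
  refine le_antisymm (iSup₂_le fun ν ⟨hν, hp⟩ => ?_) ?_
  · obtain ⟨d, hd⟩ := exists_add_of_le hp
    have hq : d + ν {a}ᶜ = q := by
      have htop : p ≠ ⊤ := ne_top_of_le_ne_top one_ne_top (hpq ▸ le_self_add)
      rw [← ENNReal.add_right_inj htop, hpq, ← add_assoc, ← hd,
        prob_add_prob_compl (measurableSet_singleton a)]
    calc ∫⁻ x, r x ∂ν = r a * ν {a} + ∫⁻ x in {a}ᶜ, r x ∂ν := by
          rw [← lintegral_add_compl r (measurableSet_singleton a), lintegral_singleton]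
      _ ≤ r a * (p + d) + (⨆ x, r x) * ν {a}ᶜ := by
          rw [hd, ← setLIntegral_const]
          gcongr with x
          exact le_iSup r x
      _ ≤ p * r a + q * ⨆ x, r x := by
          rw [mul_add, ← hq, add_mul, add_assoc, mul_comm p, mul_comm d, mul_comm (ν _)]
          gcongr
          exact le_iSup r a
  · rw [ENNReal.mul_iSup]
    have : Nonempty X := ⟨a⟩
    rw [ENNReal.add_iSup]
    refine iSup_le fun x => ?_
    let ν : Measure X := p • Measure.dirac a + q • Measure.dirac x
    have hν : IsProbabilityMeasure ν := ⟨by simp [ν, hpq]⟩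
    have hp : p ≤ ν {a} := by simp [ν]
    calc p * r a + q * r x = ∫⁻ x, r x ∂ν := by simp [ν]
      _ ≤ _ := le_iSup₂ (f := fun (ν : Measure X)
          (_ : ν ∈ {ν : Measure X | IsProbabilityMeasure ν ∧ p ≤ ν {a}}) => ∫⁻ x, r x ∂ν)
          ν ⟨hν, hp⟩

end SparseSup

section Risk

variable {Ω : Type*} {mΩ : MeasurableSpace Ω} {P : Measure Ω} {E : Type*} [NormedAddCommGroup E]
  {Z : Ω → E} {τ : ℝ}

/-- The risk `E ‖x - η(x + Z; τ)‖²` of soft thresholding at a fixed signal `x`, for the noise `Z`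
on the probability space `(Ω, P)`. -/
def softThresholdRisk [NormedSpace ℝ E] (P : Measure Ω) (Z : Ω → E) (τ : ℝ) (x : E) : ℝ≥0∞ :=
  ∫⁻ ω, ENNReal.ofReal (‖x - softThreshold τ (x + Z ω)‖ ^ 2) ∂P

lemma softThresholdRisk_zero [NormedSpace ℝ E] [IsProbabilityMeasure P] (hZ : MemLp Z 2 P)
    (hτ : 0 ≤ τ) :
    softThresholdRisk P Z τ 0 = ENNReal.ofReal (∫ ω, max (‖Z ω‖ - τ) 0 ^ 2 ∂P) := by
  rw [ofReal_integral_eq_lintegral_ofReal (integrable_max_sub_zero_sq hZ.norm τ)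
    (Eventually.of_forall fun ω => sq_nonneg _)]
  simp [softThresholdRisk, norm_softThreshold hτ]

lemma aestronglyMeasurable_softThreshold_add [NormedSpace ℝ E]
    (hZ : AEStronglyMeasurable Z P) (τ : ℝ) (x : E) :
    AEStronglyMeasurable (fun ω => softThreshold τ (x + Z ω)) P := by
  have hadd : AEStronglyMeasurable (fun ω => x + Z ω) P := hZ.const_add x
  have hcoef : AEMeasurable (fun ω => max (1 - τ / ‖x + Z ω‖) 0) P :=
    ((hadd.norm.aemeasurable.const_div τ).const_sub 1).max aemeasurable_const
  exact hcoef.aestronglyMeasurable.smul hadd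

variable [InnerProductSpace ℝ E]

lemma integral_norm_sub_sq_of_integral_eq_zero [CompleteSpace E] [IsProbabilityMeasure P]
    (hZ : MemLp Z 2 P) (hmean : P[Z] = 0) (v : E) :
    ∫ ω, ‖v - Z ω‖ ^ 2 ∂P = ‖v‖ ^ 2 + ∫ ω, ‖Z ω‖ ^ 2 ∂P := by
  have hint : Integrable Z P := hZ.integrable one_le_two
  have hcross : Integrable (fun ω => 2 * inner ℝ v (Z ω)) P := (hint.const_inner v).const_mul 2
  have hlin : Integrable (fun ω => ‖v‖ ^ 2 - 2 * inner ℝ v (Z ω)) P :=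
    (integrable_const _).sub hcross
  simp only [norm_sub_sq_real]
  rw [integral_add hlin hZ.norm.integrable_sq, integral_sub (integrable_const _) hcross,
    integral_const_mul, integral_inner hint, hmean]
  simp

lemma softThresholdRisk_le [CompleteSpace E] [IsProbabilityMeasure P] (hZ : MemLp Z 2 P)
    (hmean : P[Z] = 0) (hτ : 0 ≤ τ) (x : E) :
    softThresholdRisk P Z τ x ≤ ENNReal.ofReal (τ ^ 2 + ∫ ω, ‖Z ω‖ ^ 2 ∂P) := by
  let g : Ω → ℝ := fun ω => ‖clipNorm τ x - Z ω‖ ^ 2 + (τ ^ 2 - ‖clipNorm τ x‖ ^ 2)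
  have hdist : Integrable (fun ω => ‖clipNorm τ x - Z ω‖ ^ 2) P :=
    ((memLp_const _).sub hZ).norm.integrable_sq
  have hle : ∀ ω, ‖x - softThreshold τ (x + Z ω)‖ ^ 2 ≤ g ω := fun ω =>
    norm_sub_softThreshold_add_sq_le hτ x (Z ω)
  have hg : ∫ ω, g ω ∂P = τ ^ 2 + ∫ ω, ‖Z ω‖ ^ 2 ∂P := by
    rw [integral_add hdist (integrable_const _), integral_norm_sub_sq_of_integral_eq_zero hZ hmean]
    simp only [integral_const, probReal_univ, one_smul]
    ring
  rw [← hg, ofReal_integral_eq_lintegral_ofReal (f := g) (hdist.add (integrable_const _))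
    (Eventually.of_forall fun ω => (sq_nonneg _).trans (hle ω))]
  exact lintegral_mono fun ω => ENNReal.ofReal_le_ofReal (hle ω)

-- Along a ray `t • e`, `t → ∞`, the residual tends to `τ • e - Z`; conclude by Fatou's lemma.
lemma le_iSup_softThresholdRisk [CompleteSpace E] [Nontrivial E] [IsProbabilityMeasure P]
    (hZ : MemLp Z 2 P) (hmean : P[Z] = 0) (τ : ℝ) :
    ENNReal.ofReal (τ ^ 2 + ∫ ω, ‖Z ω‖ ^ 2 ∂P) ≤ ⨆ x, softThresholdRisk P Z τ x := by
  obtain ⟨e, he⟩ := exists_norm_eq E zero_le_one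
  have he0 : e ≠ 0 := by rintro rfl; simp at he
  let loss : ℝ → Ω → ℝ≥0∞ := fun t ω =>
    ENNReal.ofReal (‖t • e - softThreshold τ (t • e + Z ω)‖ ^ 2)
  have hdist : Integrable (fun ω => ‖τ • e - Z ω‖ ^ 2) P :=
    ((memLp_const _).sub hZ).norm.integrable_sq
  have hmeas : ∀ t, AEMeasurable (loss t) P := fun t =>
    ((aestronglyMeasurable_const.sub
      (aestronglyMeasurable_softThreshold_add hZ.1 τ _)).norm.pow 2).aemeasurable.ennreal_ofReal
  have hlim : ∀ ω, Tendsto (loss · ω) atTop (nhds (ENNReal.ofReal (‖τ • e - Z ω‖ ^ 2))) := by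
    intro ω
    simp only [loss, sub_softThreshold_add]
    have h := tendsto_clipNorm_smul_add τ he0 (Z ω)
    rw [he, div_one] at h
    exact ENNReal.tendsto_ofReal ((h.sub_const _).norm.pow 2)
  calc ENNReal.ofReal (τ ^ 2 + ∫ ω, ‖Z ω‖ ^ 2 ∂P)
      = ENNReal.ofReal (∫ ω, ‖τ • e - Z ω‖ ^ 2 ∂P) := by
        rw [integral_norm_sub_sq_of_integral_eq_zero hZ hmean, norm_smul, he, mul_one,
          Real.norm_eq_abs, sq_abs]
    _ = ∫⁻ ω, liminf (loss · ω) atTop ∂P := by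
        rw [ofReal_integral_eq_lintegral_ofReal hdist (Eventually.of_forall fun _ => sq_nonneg _)]
        simp only [(hlim _).liminf_eq]
    _ ≤ liminf (fun t => ∫⁻ ω, loss t ω ∂P) atTop := lintegral_liminf_le' hmeas
    _ ≤ ⨆ x, softThresholdRisk P Z τ x :=
        liminf_le_of_frequently_le' (Frequently.of_forall fun t =>
          le_iSup (softThresholdRisk P Z τ) (t • e))

lemma iSup_softThresholdRisk [CompleteSpace E] [Nontrivial E] [IsProbabilityMeasure P]
    (hZ : MemLp Z 2 P) (hmean : P[Z] = 0) (hτ : 0 ≤ τ) :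
    ⨆ x, softThresholdRisk P Z τ x = ENNReal.ofReal (τ ^ 2 + ∫ ω, ‖Z ω‖ ^ 2 ∂P) :=
  le_antisymm (iSup_le (softThresholdRisk_le hZ hmean hτ)) (le_iSup_softThresholdRisk hZ hmean τ)

end Risk

section PiNoise

variable {ι : Type*} [Fintype ι] {ρ : ι → Measure ℝ} [∀ i, IsProbabilityMeasure (ρ i)]

lemma memLp_toLp_pi {p : ℝ≥0∞} (hρ : ∀ i, MemLp id p (ρ i)) :
    MemLp (fun z : ι → ℝ => WithLp.toLp 2 z) p (Measure.pi ρ) :=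
  .of_eval_piLp fun i => (hρ i).comp_measurePreserving (measurePreserving_eval ρ i)

lemma integral_toLp_pi (hρ : ∀ i, Integrable id (ρ i)) (hmean : ∀ i, ∫ x, x ∂ρ i = 0) :
    ∫ z, WithLp.toLp 2 z ∂Measure.pi ρ = 0 := by
  ext i
  rw [eval_integral_piLp fun i => integrable_eval (hρ i)]
  exact integral_eval.trans (hmean i)

lemma integral_norm_toLp_sq_pi (hρ : ∀ i, MemLp id 2 (ρ i)) :
    ∫ z, ‖WithLp.toLp 2 z‖ ^ 2 ∂Measure.pi ρ = ∑ i, ∫ x, x ^ 2 ∂ρ i := by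
  simp only [EuclideanSpace.real_norm_sq_eq]
  rw [integral_finsetSum _ fun i _ =>
    integrable_comp_eval (μ := ρ) (i := i) (f := fun x : ℝ => x ^ 2) (hρ i).integrable_sq]
  exact Finset.sum_congr rfl fun i _ =>
    integral_comp_eval (μ := ρ) (f := fun x : ℝ => x ^ 2) (by fun_prop)

lemma memLp_norm_toLp_sq_pi (hρ : ∀ i, MemLp (fun x => x ^ 2) 2 (ρ i)) :
    MemLp (fun z : ι → ℝ => ‖WithLp.toLp 2 z‖ ^ 2) 2 (Measure.pi ρ) := by
  simp only [EuclideanSpace.real_norm_sq_eq]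
  exact memLp_finsetSum _ fun i _ => (hρ i).comp_measurePreserving (measurePreserving_eval ρ i)

lemma variance_norm_toLp_sq_pi (hρ : ∀ i, MemLp (fun x => x ^ 2) 2 (ρ i)) :
    Var[fun z => ‖WithLp.toLp 2 z‖ ^ 2; Measure.pi ρ] = ∑ i, Var[fun x => x ^ 2; ρ i] := by
  rw [← variance_sum_pi hρ]
  congr with z
  simp [EuclideanSpace.real_norm_sq_eq]

end PiNoise

section NormalizedWorstRisk

variable {Ω : Type*} {mΩ : MeasurableSpace Ω} {P : Measure Ω} {R : Ω → ℝ} {ε : ℝ}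

/-- The worst-case risk of soft thresholding at `τ = s √B`, divided by `B`, in terms of the
normalized noise norm `R = ‖Z‖ / √B`: the signal `0` has weight `1 - ε` and risk `E (R - s)₊²`, an
infinitely large signal has weight `ε` and risk `1 + s²`. -/
def normalizedWorstRisk (P : Measure Ω) (R : Ω → ℝ) (ε s : ℝ) : ℝ :=
  (1 - ε) * ∫ ω, max (R ω - s) 0 ^ 2 ∂P + ε * (1 + s ^ 2)

variable [IsProbabilityMeasure P]

lemma normalizedWorstRisk_le (hR : MemLp R 2 P) (hR1 : ∫ ω, R ω ^ 2 ∂P = 1) (hε1 : ε ≤ 1) (s : ℝ) :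
    normalizedWorstRisk P R ε s ≤ 1 - 2 * (1 - ε) * s * P[R] + s ^ 2 := by
  have h := mul_le_mul_of_nonneg_left (integral_max_sub_zero_sq_le hR s) (sub_nonneg.2 hε1)
  rw [hR1] at h
  unfold normalizedWorstRisk
  linarith

-- For `s ≤ r` equality holds with weight `1` instead of `ε` on the square `(s - (1 - ε) r)²`; the
-- weight `ε` comes from `s > r`, where the right side is `ε s²`.
lemma sq_add_sq_le_max_sub_zero_sq {r : ℝ} (hr : 0 ≤ r) (hε0 : 0 ≤ ε) (hε1 : ε ≤ 1) (s : ℝ) :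
    ε * (1 - ε) * r ^ 2 + ε * (s - (1 - ε) * r) ^ 2 ≤ (1 - ε) * max (r - s) 0 ^ 2 + ε * s ^ 2 := by
  have := sub_nonneg.2 hε1
  rcases le_total r s with h | h
  · have hgap : 0 ≤ ε * (1 - ε) * r * (2 * (s - r) + ε * r) := by
      have := sub_nonneg.2 h
      positivity
    rw [max_eq_right (sub_nonpos.2 h)]
    linarith
  · have hgap : 0 ≤ (1 - ε) * (s - (1 - ε) * r) ^ 2 := by positivity
    rw [max_eq_left (sub_nonneg.2 h)]
    linarith

lemma le_normalizedWorstRisk (hR : MemLp R 2 P) (hR0 : ∀ ω, 0 ≤ R ω) (hε0 : 0 ≤ ε) (hε1 : ε ≤ 1)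
    (s : ℝ) :
    ε + ε * (1 - ε) * P[R] ^ 2 + ε * (s - (1 - ε) * P[R]) ^ 2 ≤ normalizedWorstRisk P R ε s := by
  have h := mul_le_mul_of_nonneg_left (sq_max_integral_sub_zero_le hR s) (sub_nonneg.2 hε1)
  have hquad := sq_add_sq_le_max_sub_zero_sq (integral_nonneg (μ := P) hR0) hε0 hε1 s
  unfold normalizedWorstRisk
  linarith

end NormalizedWorstRisk

section GaussianNorm

instance isProbabilityMeasure_stdGaussian (B : ℕ) :
    IsProbabilityMeasure (_root_.stdGaussian B) := by
  unfold _root_.stdGaussian; infer_instance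

lemma memLp_sq_gaussianReal : MemLp (fun x : ℝ => x ^ 2) 2 (gaussianReal 0 1) := by
  rw [memLp_two_iff_integrable_sq (by fun_prop)]
  have h := (memLp_id_gaussianReal (μ := 0) (v := 1) 4).integrable_norm_pow (p := 4) (by norm_num)
  simpa [← pow_mul, Even.pow_abs (by decide : Even 4)] using h

lemma integral_sq_gaussianReal : ∫ x, x ^ 2 ∂gaussianReal 0 1 = 1 := by
  have h := variance_eq_sub (memLp_id_gaussianReal (μ := 0) (v := 1) 2)
  simpa using h.symm

lemma memLp_toLp_stdGaussian (B : ℕ) :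
    MemLp (fun z : Fin B → ℝ => WithLp.toLp 2 z) 2 (_root_.stdGaussian B) :=
  memLp_toLp_pi fun _ => memLp_id_gaussianReal 2

lemma integral_toLp_stdGaussian (B : ℕ) :
    ∫ z, WithLp.toLp 2 z ∂_root_.stdGaussian B = 0 :=
  integral_toLp_pi (fun _ => (memLp_id_gaussianReal 1).integrable le_rfl)
    fun _ => integral_id_gaussianReal

lemma integral_norm_toLp_sq_stdGaussian (B : ℕ) :
    ∫ z, ‖WithLp.toLp 2 z‖ ^ 2 ∂_root_.stdGaussian B = B :=
  (integral_norm_toLp_sq_pi fun _ => memLp_id_gaussianReal 2).trans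
    (by simp [integral_sq_gaussianReal])

/-- The normalized noise norm `‖z‖₂ / √B`, which concentrates at `1` for large `B`. -/
def normalizedNorm (B : ℕ) (z : Fin B → ℝ) : ℝ := ‖WithLp.toLp 2 z‖ / √B

lemma normalizedNorm_nonneg (B : ℕ) (z : Fin B → ℝ) : 0 ≤ normalizedNorm B z := by
  unfold normalizedNorm; positivity

lemma normalizedNorm_sq (B : ℕ) (z : Fin B → ℝ) :
    normalizedNorm B z ^ 2 = ‖WithLp.toLp 2 z‖ ^ 2 / B := by
  rw [normalizedNorm, div_pow, Real.sq_sqrt B.cast_nonneg]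

lemma memLp_normalizedNorm (B : ℕ) : MemLp (normalizedNorm B) 2 (_root_.stdGaussian B) := by
  unfold normalizedNorm
  simp only [div_eq_mul_inv]
  exact (memLp_toLp_stdGaussian B).norm.mul_const (√B)⁻¹

variable {B : ℕ}

lemma integral_normalizedNorm_sq (hB : 0 < B) :
    ∫ z, normalizedNorm B z ^ 2 ∂_root_.stdGaussian B = 1 := by
  simp only [normalizedNorm_sq]
  rw [integral_div, integral_norm_toLp_sq_stdGaussian, div_self (by positivity)]

lemma variance_normalizedNorm_sq (B : ℕ) :
    Var[fun z => normalizedNorm B z ^ 2; _root_.stdGaussian B] =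
      Var[fun x => x ^ 2; gaussianReal 0 1] / B := by
  have h := variance_norm_toLp_sq_pi fun _ : Fin B => memLp_sq_gaussianReal
  simp only [normalizedNorm_sq, div_eq_inv_mul]
  rw [variance_const_mul, _root_.stdGaussian, h]
  simp only [Finset.sum_const, Finset.card_univ, Fintype.card_fin, nsmul_eq_mul]
  field_simp

lemma sq_integral_normalizedNorm_le_one (hB : 0 < B) :
    (∫ z, normalizedNorm B z ∂_root_.stdGaussian B) ^ 2 ≤ 1 :=
  (sq_integral_le_integral_sq (memLp_normalizedNorm B)).trans_eq (integral_normalizedNorm_sq hB)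

lemma one_sub_div_le_sq_integral_normalizedNorm (hB : 0 < B) :
    1 - Var[fun x => x ^ 2; gaussianReal 0 1] / B ≤
      (∫ z, normalizedNorm B z ∂_root_.stdGaussian B) ^ 2 := by
  have hsq : MemLp (fun z => normalizedNorm B z ^ 2) 2 (_root_.stdGaussian B) := by
    simp only [normalizedNorm_sq, div_eq_mul_inv]
    exact (memLp_norm_toLp_sq_pi fun _ => memLp_sq_gaussianReal).mul_const _
  have hvar := variance_mul_integral_sq_le hsq (normalizedNorm_nonneg B) (memLp_normalizedNorm B).1
  rw [variance_normalizedNorm_sq B, variance_eq_sub (memLp_normalizedNorm B)] at hvar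
  simp only [Pi.pow_apply, integral_normalizedNorm_sq hB] at hvar
  linarith

lemma tendsto_sq_integral_normalizedNorm :
    Tendsto (fun B : ℕ => (∫ z, normalizedNorm B z ∂_root_.stdGaussian B) ^ 2) atTop (nhds 1) := by
  have hlow : Tendsto (fun B : ℕ => 1 - Var[fun x => x ^ 2; gaussianReal 0 1] / (B : ℝ)) atTop
      (nhds 1) := by
    simpa using (tendsto_const_div_atTop_nhds_zero_nat (𝕜 := ℝ) _).const_sub 1
  refine tendsto_of_tendsto_of_tendsto_of_le_of_le' hlow tendsto_const_nhds ?_ ?_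
  · filter_upwards [eventually_gt_atTop 0] with B hB
      using one_sub_div_le_sq_integral_normalizedNorm hB
  · filter_upwards [eventually_gt_atTop 0] with B hB using sq_integral_normalizedNorm_le_one hB

lemma tendsto_integral_normalizedNorm :
    Tendsto (fun B : ℕ => ∫ z, normalizedNorm B z ∂_root_.stdGaussian B) atTop (nhds 1) := by
  have h := tendsto_sq_integral_normalizedNorm.sqrt
  simpa [Real.sqrt_sq (integral_nonneg (normalizedNorm_nonneg _))] using h

end GaussianNorm

section BlockSoft

variable {B : ℕ} {ε τ : ℝ}

lemma toLp_blockSoft (τ : ℝ) (y : Fin B → ℝ) :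
    WithLp.toLp 2 (blockSoft B τ y) = softThreshold τ (WithLp.toLp 2 y) := by
  simp [blockSoft, softThreshold, EuclideanSpace.norm_eq]

lemma measurable_blockSoft (B : ℕ) (τ : ℝ) : Measurable (blockSoft B τ) := by
  unfold blockSoft; fun_prop

lemma lintegral_prod_blockSoft (ν : Measure (Fin B → ℝ)) (τ : ℝ) :
    ∫⁻ p, ENNReal.ofReal (∑ i, (p.1 i - blockSoft B τ (p.1 + p.2) i) ^ 2)
        ∂ν.prod (_root_.stdGaussian B) =
      ∫⁻ x, softThresholdRisk (_root_.stdGaussian B) (WithLp.toLp 2) τ (WithLp.toLp 2 x) ∂ν := by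
  have hmeas : Measurable fun p : (Fin B → ℝ) × (Fin B → ℝ) =>
      ENNReal.ofReal (∑ i, (p.1 i - blockSoft B τ (p.1 + p.2) i) ^ 2) := by
    have := measurable_blockSoft B τ
    fun_prop
  rw [lintegral_prod _ hmeas.aemeasurable]
  simp only [softThresholdRisk, ← WithLp.toLp_add, ← toLp_blockSoft, ← WithLp.toLp_sub,
    EuclideanSpace.real_norm_sq_eq, Pi.sub_apply]

lemma blockSoftWorst_eq (hε0 : 0 ≤ ε) (hε1 : ε ≤ 1) (τ : ℝ) :
    blockSoftWorst B ε τ =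
      ENNReal.ofReal (1 - ε) * softThresholdRisk (_root_.stdGaussian B) (WithLp.toLp 2) τ 0 +
      ENNReal.ofReal ε * ⨆ x, softThresholdRisk (_root_.stdGaussian B) (WithLp.toLp 2) τ x := by
  have hsum : ENNReal.ofReal (1 - ε) + ENNReal.ofReal ε = 1 := by
    rw [← ENNReal.ofReal_add (sub_nonneg.2 hε1) hε0]; simp
  simp only [blockSoftWorst, lintegral_prod_blockSoft]
  rw [← (WithLp.toLp_surjective 2).iSup_comp]
  exact iSup_lintegral_of_le_measure_singleton _ 0 hsum

lemma integral_max_normalizedNorm_sub_zero_sq (B : ℕ) (τ : ℝ) :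
    ∫ z, max (normalizedNorm B z - τ / √B) 0 ^ 2 ∂_root_.stdGaussian B =
      (∫ z, max (‖WithLp.toLp 2 z‖ - τ) 0 ^ 2 ∂_root_.stdGaussian B) / B := by
  rw [← integral_div]
  congr with z
  rw [normalizedNorm, ← sub_div, ← zero_div √(B : ℝ), max_div_div_right (Real.sqrt_nonneg _),
    div_pow, Real.sq_sqrt B.cast_nonneg, zero_div]

lemma inv_mul_blockSoftWorst (hB : 0 < B) (hε0 : 0 ≤ ε) (hε1 : ε ≤ 1) (hτ : 0 ≤ τ) :
    (B : ℝ≥0∞)⁻¹ * blockSoftWorst B ε τ =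
      ENNReal.ofReal
        (normalizedWorstRisk (_root_.stdGaussian B) (normalizedNorm B) ε (τ / √B)) := by
  have : NeZero B := ⟨hB.ne'⟩
  have hB' : (0 : ℝ) < B := Nat.cast_pos.2 hB
  rw [blockSoftWorst_eq hε0 hε1, softThresholdRisk_zero (memLp_toLp_stdGaussian B) hτ,
    iSup_softThresholdRisk (memLp_toLp_stdGaussian B) (integral_toLp_stdGaussian B) hτ,
    integral_norm_toLp_sq_stdGaussian, ← ENNReal.ofReal_mul (sub_nonneg.2 hε1),
    ← ENNReal.ofReal_mul hε0, ← ENNReal.ofReal_add, ← ENNReal.ofReal_natCast,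
    ← ENNReal.ofReal_inv_of_pos hB', ← ENNReal.ofReal_mul (by positivity), normalizedWorstRisk,
    integral_max_normalizedNorm_sub_zero_sq, div_pow, Real.sq_sqrt hB'.le]
  · congr 1
    field_simp
    ring
  · exact mul_nonneg (sub_nonneg.2 hε1) (integral_nonneg fun _ => sq_nonneg _)
  · positivity

lemma MBlockSoft_le (hB : 0 < B) (hε0 : 0 ≤ ε) (hε1 : ε ≤ 1) :
    MBlockSoft B ε ≤ ENNReal.ofReal
      (1 - (1 - ε) ^ 2 * (∫ z, normalizedNorm B z ∂_root_.stdGaussian B) ^ 2) := by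
  set r : ℝ := ∫ z, normalizedNorm B z ∂_root_.stdGaussian B
  have hr : 0 ≤ r := integral_nonneg (normalizedNorm_nonneg B)
  have hτ : 0 ≤ (1 - ε) * r * √B := by
    have := sub_nonneg.2 hε1
    positivity
  have hB' : √(B : ℝ) ≠ 0 := by positivity
  calc MBlockSoft B ε ≤ (B : ℝ≥0∞)⁻¹ * blockSoftWorst B ε ((1 - ε) * r * √B) :=
        mul_le_mul_right (iInf₂_le _ hτ) _
    _ = ENNReal.ofReal (normalizedWorstRisk (_root_.stdGaussian B) (normalizedNorm B) ε
          ((1 - ε) * r)) := by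
        rw [inv_mul_blockSoftWorst hB hε0 hε1 hτ, mul_div_cancel_right₀ _ hB']
    _ ≤ _ := by
        refine ENNReal.ofReal_le_ofReal ((normalizedWorstRisk_le (memLp_normalizedNorm B)
          (integral_normalizedNorm_sq hB) hε1 _).trans_eq ?_)
        ring

lemma le_MBlockSoft (hB : 0 < B) (hε0 : 0 ≤ ε) (hε1 : ε ≤ 1) :
    ENNReal.ofReal
        (ε + ε * (1 - ε) * (∫ z, normalizedNorm B z ∂_root_.stdGaussian B) ^ 2) ≤
      MBlockSoft B ε := by
  have hB' : (B : ℝ≥0∞)⁻¹ ≠ ⊤ := by simp [hB.ne']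
  simp only [MBlockSoft, ENNReal.mul_iInf_of_ne (by simp) hB']
  refine le_iInf₂ fun τ hτ => ?_
  rw [inv_mul_blockSoftWorst hB hε0 hε1 hτ]
  refine ENNReal.ofReal_le_ofReal (le_trans (le_add_of_nonneg_right ?_)
    (le_normalizedWorstRisk (memLp_normalizedNorm B) (normalizedNorm_nonneg B) hε0 hε1 _))
  positivity

theorem tendsto_MBlockSoft (hε0 : 0 ≤ ε) (hε1 : ε ≤ 1) :
    Tendsto (fun B : ℕ => MBlockSoft B ε) atTop (nhds (ENNReal.ofReal (2 * ε - ε ^ 2))) := by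
  have hr := tendsto_sq_integral_normalizedNorm
  have hlow := (hr.const_mul (ε * (1 - ε))).const_add ε
  have hupp := (hr.const_mul ((1 - ε) ^ 2)).const_sub 1
  rw [show ε + ε * (1 - ε) * 1 = 2 * ε - ε ^ 2 by ring] at hlow
  rw [show 1 - (1 - ε) ^ 2 * 1 = 2 * ε - ε ^ 2 by ring] at hupp
  refine tendsto_of_tendsto_of_tendsto_of_le_of_le' (ENNReal.tendsto_ofReal hlow)
    (ENNReal.tendsto_ofReal hupp) ?_ ?_
  · filter_upwards [eventually_gt_atTop 0] with B hB using le_MBlockSoft hB hε0 hε1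
  · filter_upwards [eventually_gt_atTop 0] with B hB using MBlockSoft_le hB hε0 hε1

lemma sq_sub_le_of_isMinimizer (hB : 0 < B) (hε0 : 0 < ε) (hε1 : ε ≤ 1) (hτ : 0 ≤ τ)
    (hmin : (B : ℝ≥0∞)⁻¹ * blockSoftWorst B ε τ = MBlockSoft B ε) :
    (τ / √B - (1 - ε) * ∫ z, normalizedNorm B z ∂_root_.stdGaussian B) ^ 2 ≤
      (1 - ε) / ε * (1 - (∫ z, normalizedNorm B z ∂_root_.stdGaussian B) ^ 2) := by
  set r : ℝ := ∫ z, normalizedNorm B z ∂_root_.stdGaussian B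
  have hle := hmin.trans_le (MBlockSoft_le hB hε0.le hε1)
  rw [inv_mul_blockSoftWorst hB hε0.le hε1 hτ, ENNReal.ofReal_le_ofReal_iff] at hle
  · have hge := le_normalizedWorstRisk (memLp_normalizedNorm B) (normalizedNorm_nonneg B) hε0.le hε1
      (τ / √B)
    rw [div_mul_eq_mul_div, le_div_iff₀' hε0]
    linarith
  · nlinarith [sq_integral_normalizedNorm_le_one hB]

theorem tendsto_minimizer_div_sqrt (hε0 : 0 < ε) (hε1 : ε ≤ 1) {τ : ℕ → ℝ} (hτ : ∀ B, 0 ≤ τ B)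
    (hmin : ∀ B : ℕ, 0 < B → (B : ℝ≥0∞)⁻¹ * blockSoftWorst B ε (τ B) = MBlockSoft B ε) :
    Tendsto (fun B : ℕ => τ B / √B) atTop (nhds (1 - ε)) := by
  have hgap := (tendsto_sq_integral_normalizedNorm.const_sub 1).const_mul ((1 - ε) / ε)
  rw [sub_self, mul_zero] at hgap
  have hsq : Tendsto (fun B : ℕ =>
      (τ B / √B - (1 - ε) * ∫ z, normalizedNorm B z ∂_root_.stdGaussian B) ^ 2) atTop (nhds 0) := by
    refine squeeze_zero' (Eventually.of_forall fun _ => sq_nonneg _) ?_ hgap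
    filter_upwards [eventually_gt_atTop 0] with B hB
      using sq_sub_le_of_isMinimizer hB hε0 hε1 (hτ B) (hmin B hB)
  have hsub : Tendsto (fun B : ℕ =>
      τ B / √B - (1 - ε) * ∫ z, normalizedNorm B z ∂_root_.stdGaussian B) atTop (nhds 0) := by
    refine (tendsto_zero_iff_abs_tendsto_zero _).2 ?_
    simpa [Real.sqrt_sq_eq_abs, Function.comp_def] using hsq.sqrt
  simpa using hsub.add (tendsto_integral_normalizedNorm.const_mul (1 - ε))

end BlockSoft

/-- **Large-block limit of block soft thresholding.**
For fixed `ε ∈ (0,1)`: `lim_{B→∞} M_B(ε|BlockSoft) = 2ε − ε²`, and if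
`τ*(ε|B)` is, for each `B`, a nonnegative minimizer over `τ ≥ 0` of
`sup_{ν ∈ F_{ε,B}} (1/B) E ‖X − η^soft(X+Z;τ)‖₂²`, then
`lim_{B→∞} τ*(ε|B)/√B = 1 − ε`. -/
theorem blockSoft_minimax_largeB
    (ε : ℝ) (hε0 : 0 < ε) (hε1 : ε < 1)
    (τstar : ℕ → ℝ) (hτpos : ∀ B : ℕ, 0 ≤ τstar B)
    (hmin : ∀ B : ℕ, 1 ≤ B →
      (B : ℝ≥0∞)⁻¹ * blockSoftWorst B ε (τstar B) = MBlockSoft B ε) :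
    Tendsto (fun B : ℕ => MBlockSoft B ε) atTop
      (nhds (ENNReal.ofReal (2 * ε - ε ^ 2))) ∧
    Tendsto (fun B : ℕ => τstar B / Real.sqrt B) atTop (nhds (1 - ε)) := by
  exact ⟨tendsto_MBlockSoft hε0.le hε1.le, tendsto_minimizer_div_sqrt hε0 hε1.le hτpos hmin⟩
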